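/- Let X be a finite set of points in ℝ² with the L1 metric. If (p,q) and (a,b) are two distinct arrows with ⟨p,q⟩ = ⟨a,b⟩, then p, q, a, b are four distinct points that are the corners of an axis-parallel rectangle, with {p,q} and {a,b} being the two diagonal pairs; that is, {x(p),x(q)} = {x(a),x(b)}, {y(p),y(q)} = {y(a),y(b)}, x(p) ≠ x(q) and y(p) ≠ y(q), and {p,q} ∩ {a,b} = ∅. -/

import Mathlib

noncomputable section
open Classical

/-- The L1 (Manhattan) metric on ℝ². -/
def rho (u v : ℝ × ℝ) : ℝ := |u.1 - v.1| + |u.2 - v.2|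

/-- `z` is between `u` and `v` (w.r.t. the L1 metric): the three points are
pairwise distinct and `ρ(u,v) = ρ(u,z) + ρ(z,v)`. -/
def MBtw (u z v : ℝ × ℝ) : Prop :=
  u ≠ z ∧ z ≠ v ∧ u ≠ v ∧ rho u v = rho u z + rho z v

/-- The line of `X` induced by distinct points `u, v`. -/
def lineThrough (X : Finset (ℝ × ℝ)) (u v : ℝ × ℝ) : Finset (ℝ × ℝ) :=
  X.filter fun z => z = u ∨ z = v ∨ MBtw u z v ∨ MBtw z u v ∨ MBtw u v z

/-- `X` is non-collinear: no line induced by two distinct points of `X` equals `X`. -/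
def NonCollinear (X : Finset (ℝ × ℝ)) : Prop :=
  ∀ u ∈ X, ∀ v ∈ X, u ≠ v → lineThrough X u v ≠ X

/-- `{p,q}` is an increasing pair. -/
def IncPair (p q : ℝ × ℝ) : Prop := 0 < (q.1 - p.1) * (q.2 - p.2)

/-- `{p,q}` is a decreasing pair. -/
def DecPair (p q : ℝ × ℝ) : Prop := (q.1 - p.1) * (q.2 - p.2) < 0

/-- The partial order `≤_I`. -/
def leI (c d : ℝ × ℝ) : Prop := c.1 ≤ d.1 ∧ c.2 ≤ d.2

/-- `c <_I d`. -/
def ltI (c d : ℝ × ℝ) : Prop := leI c d ∧ c ≠ d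

/-- The partial order `≤_D`. -/
def leD (c d : ℝ × ℝ) : Prop := c.1 ≤ d.1 ∧ d.2 ≤ c.2

/-- `c <_D d`. -/
def ltD (c d : ℝ × ℝ) : Prop := leD c d ∧ c ≠ d

/-- `(p,q)` is a blue arrow of `X`. -/
def BlueArrow (X : Finset (ℝ × ℝ)) (p q : ℝ × ℝ) : Prop :=
  p ∈ X ∧ q ∈ X ∧ IncPair p q ∧ ltI p q ∧
  ∀ a b, a ∈ X → b ∈ X → IncPair a b → ltI a b →
    lineThrough X a b = lineThrough X p q → (ltI q b ∨ (q = b ∧ leI a p))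

/-- `(p,q)` is a red arrow of `X`. -/
def RedArrow (X : Finset (ℝ × ℝ)) (p q : ℝ × ℝ) : Prop :=
  p ∈ X ∧ q ∈ X ∧ DecPair p q ∧ ltD p q ∧
  ∀ a b, a ∈ X → b ∈ X → DecPair a b → ltD a b →
    lineThrough X a b = lineThrough X p q → (ltD q b ∨ (q = b ∧ leD a p))

/-- An arrow is a blue or a red arrow. -/
def Arrow (X : Finset (ℝ × ℝ)) (p q : ℝ × ℝ) : Prop :=
  BlueArrow X p q ∨ RedArrow X p q

/-- `a` is not an endpoint of any arrow of `X`. -/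
def NotEndpoint (X : Finset (ℝ × ℝ)) (a : ℝ × ℝ) : Prop :=
  ∀ p q, Arrow X p q → a ≠ p ∧ a ≠ q

lemma abs_btw {u z v : ℝ} (h : |u - v| = |u - z| + |z - v|) :
    (u ≤ z ∧ z ≤ v) ∨ (v ≤ z ∧ z ≤ u) := by
  rcases abs_cases (u - v) with h1 | h1 <;> rcases abs_cases (u - z) with h2 | h2 <;>
    rcases abs_cases (z - v) with h3 | h3 <;>
    first
    | (left; constructor <;> linarith)
    | (right; constructor <;> linarith)

lemma MBtw.coords {u z v : ℝ × ℝ} (h : MBtw u z v) :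
    ((u.1 ≤ z.1 ∧ z.1 ≤ v.1) ∨ (v.1 ≤ z.1 ∧ z.1 ≤ u.1)) ∧
    ((u.2 ≤ z.2 ∧ z.2 ≤ v.2) ∨ (v.2 ≤ z.2 ∧ z.2 ≤ u.2)) := by
  obtain ⟨-, -, -, h⟩ := h
  unfold rho at h
  have h1 := abs_sub_le u.1 z.1 v.1
  have h2 := abs_sub_le u.2 z.2 v.2
  exact ⟨abs_btw (by linarith), abs_btw (by linarith)⟩

lemma line_inc {X : Finset (ℝ × ℝ)} {p q z : ℝ × ℝ} (h1 : p.1 < q.1) (h2 : p.2 < q.2)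
    (hz : z ∈ lineThrough X p q) :
    (leI p z ∧ leI z q) ∨ leI z p ∨ leI q z := by
  unfold lineThrough at hz
  rw [Finset.mem_filter] at hz
  unfold leI
  rcases hz.2 with rfl | rfl | h | h | h
  · right; left; simp
  · right; right; simp
  all_goals
    obtain ⟨h3 | h3, h4 | h4⟩ := h.coords <;> grind

lemma line_dec {X : Finset (ℝ × ℝ)} {p q z : ℝ × ℝ} (h1 : p.1 < q.1) (h2 : q.2 < p.2)
    (hz : z ∈ lineThrough X p q) :
    (leD p z ∧ leD z q) ∨ leD z p ∨ leD q z := by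
  unfold lineThrough at hz
  rw [Finset.mem_filter] at hz
  unfold leD
  rcases hz.2 with rfl | rfl | h | h | h
  · right; left; simp
  · right; right; simp
  all_goals
    obtain ⟨h3 | h3, h4 | h4⟩ := h.coords <;> grind

lemma inc_lt {p q : ℝ × ℝ} (h : IncPair p q) (h' : ltI p q) : p.1 < q.1 ∧ p.2 < q.2 := by
  unfold IncPair at h
  obtain ⟨⟨h1, h2⟩, -⟩ := h'
  constructor
  · rcases h1.lt_or_eq with h3 | h3
    · exact h3
    · simp [h3] at h
  · rcases h2.lt_or_eq with h3 | h3
    · exact h3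
    · simp [h3] at h

lemma dec_lt {p q : ℝ × ℝ} (h : DecPair p q) (h' : ltD p q) : p.1 < q.1 ∧ q.2 < p.2 := by
  unfold DecPair at h
  obtain ⟨⟨h1, h2⟩, -⟩ := h'
  constructor
  · rcases h1.lt_or_eq with h3 | h3
    · exact h3
    · simp [h3] at h
  · rcases h2.lt_or_eq with h3 | h3
    · exact h3
    · simp [h3] at h

/-- A blue and a red arrow inducing the same line span the same rectangle. -/
lemma blue_red {X : Finset (ℝ × ℝ)} {p q a b : ℝ × ℝ}
    (hpq : BlueArrow X p q) (hab : RedArrow X a b)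
    (hline : lineThrough X p q = lineThrough X a b) :
    p.1 < q.1 ∧ p.2 < q.2 ∧ a.1 = p.1 ∧ b.1 = q.1 ∧ a.2 = q.2 ∧ b.2 = p.2 := by
  obtain ⟨hp, hq, hi, hl, -⟩ := hpq
  obtain ⟨ha, hb, hd, hl', -⟩ := hab
  obtain ⟨h1, h2⟩ := inc_lt hi hl
  obtain ⟨h3, h4⟩ := dec_lt hd hl'
  have hpm : p ∈ lineThrough X a b := by rw [← hline]; simp [lineThrough, hp]
  have hqm : q ∈ lineThrough X a b := by rw [← hline]; simp [lineThrough, hq]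
  have ham : a ∈ lineThrough X p q := by rw [hline]; simp [lineThrough, ha]
  have hbm : b ∈ lineThrough X p q := by rw [hline]; simp [lineThrough, hb]
  have A := line_inc h1 h2 ham
  have B := line_inc h1 h2 hbm
  have P := line_dec h3 h4 hpm
  have Q := line_dec h3 h4 hqm
  unfold leI at A B
  unfold leD at P Q
  have AB : ((p.1 ≤ a.1 ∧ b.1 ≤ q.1) ∧ (p.2 ≤ b.2 ∧ a.2 ≤ q.2)) ∨
      (b.1 ≤ p.1 ∧ a.2 ≤ p.2) ∨ (q.1 ≤ a.1 ∧ q.2 ≤ b.2) := by grind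
  have PQ : ((a.1 ≤ p.1 ∧ q.1 ≤ b.1) ∧ (b.2 ≤ p.2 ∧ q.2 ≤ a.2)) ∨
      (q.1 ≤ a.1 ∧ a.2 ≤ p.2) ∨ (b.1 ≤ p.1 ∧ q.2 ≤ b.2) := by grind
  grind

lemma pair_inter_empty {p q a b : ℝ × ℝ} (h1 : p ≠ a) (h2 : p ≠ b) (h3 : q ≠ a) (h4 : q ≠ b) :
    ({p, q} : Set (ℝ × ℝ)) ∩ {a, b} = ∅ := by
  ext z
  simp only [Set.mem_inter_iff, Set.mem_insert_iff, Set.mem_singleton_iff, Set.mem_empty_iff_false]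
  grind

/-- Two distinct arrows induce distinct lines unless they are the two diagonals
of the same axis-parallel rectangle. -/
theorem distinct_arrows_same_line_rectangle (X : Finset (ℝ × ℝ)) (p q a b : ℝ × ℝ)
    (hpq : Arrow X p q) (hab : Arrow X a b) (hne : (p, q) ≠ (a, b))
    (hline : lineThrough X p q = lineThrough X a b) :
    ({p.1, q.1} : Set ℝ) = {a.1, b.1} ∧ ({p.2, q.2} : Set ℝ) = {a.2, b.2} ∧
    p.1 ≠ q.1 ∧ p.2 ≠ q.2 ∧ ({p, q} : Set (ℝ × ℝ)) ∩ {a, b} = ∅ := by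
  have key : ∀ {u v : ℝ × ℝ}, u.2 ≠ v.2 ∨ u.1 ≠ v.1 → u ≠ v := by
    rintro u v h rfl
    simp at h
  rcases hpq with hpq | hpq <;> rcases hab with hab | hab
  · exfalso
    have h1 := hpq.2.2.2.2 a b hab.1 hab.2.1 hab.2.2.1 hab.2.2.2.1 hline.symm
    have h2 := hab.2.2.2.2 p q hpq.1 hpq.2.1 hpq.2.2.1 hpq.2.2.2.1 hline
    apply hne
    unfold ltI leI at h1 h2
    grind
  · obtain ⟨h1, h2, e1, e2, e3, e4⟩ := blue_red hpq hab hline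
    refine ⟨by rw [e1, e2], by rw [e3, e4, Set.pair_comm], h1.ne, h2.ne,
      pair_inter_empty (key ?_) (key ?_) (key ?_) (key ?_)⟩ <;> grind
  · obtain ⟨h1, h2, e1, e2, e3, e4⟩ := blue_red hab hpq hline.symm
    refine ⟨by rw [e1, e2], by rw [e3, e4, Set.pair_comm], by grind, by grind,
      pair_inter_empty (key ?_) (key ?_) (key ?_) (key ?_)⟩ <;> grind
  · exfalso
    have h1 := hpq.2.2.2.2 a b hab.1 hab.2.1 hab.2.2.1 hab.2.2.2.1 hline.symm
    have h2 := hab.2.2.2.2 p q hpq.1 hpq.2.1 hpq.2.2.1 hpq.2.2.2.1 hline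
    apply hne
    unfold ltD leD at h1 h2
    grind
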